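/- arXiv:2209.03999 — 3 statements merged into one kernel-verified Lean document; each statement's English description precedes it below -/
import Mathlib

section
/- Fix constants 0 < q < p ≤ 1 and δ > 0. There exists L > 0 such that for all n ∈ ℕ and all integers Δ with Δ ≥ δ·n, one has n²·P[Bin(n, q) > Bin(n+Δ−1, p)] ≤ L·exp(−n/L)·P[Bin(n+Δ, q) > Bin(n−1, p)], where within each probability the two binomial random variables are independent. -/
/-!
Write `n = N + 1`, let `S ~ Bin(N + 1, q)`, `D ~ Bin(N, p)` and put `T e = P[S > D + e]`.

* The joint weight of `(S, D)` at `(s + 1, d)` is at most `ρ²` times the weight at `(s, d + 1)` as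
  soon as `d < s ≤ N`, where `ρ < 1` satisfies `q (1 - p) ≤ ρ² (1 - q) p` (`weight_shift`).
  Shifting the region of summation gives `T (e + 2) ≤ ρ² T e` (`tail_add_two_le`), hence
  `ρ T e ≤ ρ ^ e T 0` (`tail_le_pow`).
* Splitting `Bin(N + Δ, p)` as `D + E` with `E ~ Bin(Δ, p)` independent (`binomE_add`), the left-hand
  probability is `𝔼[T E] ≤ ρ⁻¹ 𝔼[ρ ^ E] T 0 = ρ⁻¹ (1 - p (1 - ρ)) ^ Δ T 0`, which is exponentially
  small in `Δ ≥ δ n` relative to `T 0 = P[S > D]`, uniformly, even though `T 0` may itself be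
  exponentially small.
* Splitting `Bin(n + Δ, q)` in the same way as `S` plus a nonnegative variable shows that the
  right-hand probability is at least `T 0` (`binomE_mono_trials`).

The factor `n²` is absorbed by halving the exponential rate.
-/

open Finset

/-- Probability mass function of the binomial distribution `Bin(m, r)`. -/
noncomputable def binomPMF (m : ℕ) (r : ℝ) (k : ℕ) : ℝ :=
  (m.choose k : ℝ) * r ^ k * (1 - r) ^ (m - k)

/-- `P[X ∈ P]` for `X ~ Bin(m, r)`. -/
noncomputable def binomProb (m : ℕ) (r : ℝ) (P : ℕ → Prop) : ℝ :=
  ∑ k ∈ Finset.range (m + 1), Set.indicator {k | P k} (binomPMF m r) k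

/-- `P[(X, Y) ∈ P]` for independent `X ~ Bin(m₁, r₁)` and `Y ~ Bin(m₂, r₂)`. -/
noncomputable def binomProb2 (m₁ : ℕ) (r₁ : ℝ) (m₂ : ℕ) (r₂ : ℝ) (P : ℕ → ℕ → Prop) : ℝ :=
  ∑ j ∈ Finset.range (m₁ + 1), ∑ k ∈ Finset.range (m₂ + 1),
    Set.indicator {jk : ℕ × ℕ | P jk.1 jk.2}
      (fun jk => binomPMF m₁ r₁ jk.1 * binomPMF m₂ r₂ jk.2) (j, k)

/-- The expectation `𝔼[f X]` for `X ~ Bin(m, r)`. -/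
noncomputable def binomE (m : ℕ) (r : ℝ) (f : ℕ → ℝ) : ℝ :=
  ∑ k ∈ Finset.range (m + 1), binomPMF m r k * f k

lemma binomPMF_nonneg {m : ℕ} {r : ℝ} (h0 : 0 ≤ r) (h1 : r ≤ 1) (k : ℕ) :
    0 ≤ binomPMF m r k := by
  have : 0 ≤ 1 - r := by linarith
  unfold binomPMF
  positivity

lemma binomPMF_eq_zero {m k : ℕ} (r : ℝ) (h : m < k) : binomPMF m r k = 0 := by
  simp [binomPMF, Nat.choose_eq_zero_of_lt h]

lemma binomE_mono {m : ℕ} {r : ℝ} (h0 : 0 ≤ r) (h1 : r ≤ 1) {f g : ℕ → ℝ}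
    (h : ∀ k, f k ≤ g k) : binomE m r f ≤ binomE m r g :=
  Finset.sum_le_sum fun k _ => mul_le_mul_of_nonneg_left (h k) (binomPMF_nonneg h0 h1 k)

lemma binomE_nonneg {m : ℕ} {r : ℝ} (h0 : 0 ≤ r) (h1 : r ≤ 1) {f : ℕ → ℝ}
    (h : ∀ k, 0 ≤ f k) : 0 ≤ binomE m r f :=
  Finset.sum_nonneg fun k _ => mul_nonneg (binomPMF_nonneg h0 h1 k) (h k)

lemma binomE_mul_const (m : ℕ) (r : ℝ) (f : ℕ → ℝ) (c : ℝ) :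
    binomE m r (fun k => f k * c) = binomE m r f * c := by
  simp only [binomE, Finset.sum_mul, mul_assoc]

lemma binomE_comm (m₁ m₂ : ℕ) (r₁ r₂ : ℝ) (f : ℕ → ℕ → ℝ) :
    binomE m₁ r₁ (fun j => binomE m₂ r₂ (fun k => f j k)) =
      binomE m₂ r₂ (fun k => binomE m₁ r₁ (fun j => f j k)) := by
  simp only [binomE, Finset.mul_sum]
  rw [Finset.sum_comm]
  refine Finset.sum_congr rfl fun k _ => Finset.sum_congr rfl fun j _ => ?_
  ring

/-- The probability generating function of the binomial distribution. -/
lemma binomE_pow (m : ℕ) (r x : ℝ) :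
    binomE m r (fun k => x ^ k) = (1 - r * (1 - x)) ^ m := by
  have h : 1 - r * (1 - x) = r * x + (1 - r) := by ring
  rw [h, add_pow, binomE]
  refine Finset.sum_congr rfl fun k _ => ?_
  rw [binomPMF, mul_pow]
  ring

lemma binomE_const (m : ℕ) (r c : ℝ) : binomE m r (fun _ => c) = c := by
  have h := binomE_pow m r 1
  simp only [one_pow, sub_self, mul_zero, sub_zero] at h
  have h2 := binomE_mul_const m r (fun _ => 1) c
  rw [h] at h2
  simpa using h2

/-- Conditioning on the outcome of one trial. -/
lemma binomE_succ (m : ℕ) (r : ℝ) (f : ℕ → ℝ) :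
    binomE (m + 1) r f = (1 - r) * binomE m r f + r * binomE m r (fun k => f (k + 1)) := by
  have key : ∀ k ∈ Finset.range (m + 1), binomPMF (m + 1) r (k + 1) * f (k + 1) =
      r * (binomPMF m r k * f (k + 1)) + (1 - r) * (binomPMF m r (k + 1) * f (k + 1)) := by
    intro k hk
    have hk' : k ≤ m := by simpa [Nat.lt_succ_iff] using hk
    rcases hk'.eq_or_lt with rfl | hlt
    · rw [binomPMF_eq_zero r (Nat.lt_succ_self k)]
      simp [binomPMF]
      ring
    · obtain ⟨d, rfl⟩ := Nat.exists_eq_add_of_lt hlt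
      have e1 : k + d + 1 + 1 - (k + 1) = d + 1 := by omega
      have e2 : k + d + 1 - k = d + 1 := by omega
      have e3 : k + d + 1 - (k + 1) = d := by omega
      simp only [binomPMF, e1, e2, e3, Nat.choose_succ_succ (k + d + 1) k]
      push_cast
      ring
  have h0 : binomPMF (m + 1) r 0 * f 0 = (1 - r) * (binomPMF m r 0 * f 0) := by
    simp [binomPMF]
    ring
  -- the extra term at `k = m + 1` vanishes
  have hext : binomE m r f = ∑ k ∈ Finset.range (m + 2), binomPMF m r k * f k := by
    rw [Finset.sum_range_succ, binomPMF_eq_zero r (Nat.lt_succ_self m)]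
    simp [binomE]
  rw [hext, Finset.sum_range_succ' _ (m + 1)]
  unfold binomE
  rw [Finset.sum_range_succ' _ (m + 1), Finset.sum_congr rfl key, h0, Finset.sum_add_distrib,
    ← Finset.mul_sum, ← Finset.mul_sum]
  ring

/-- `Bin(m + l, r)` is the law of the sum of independent `Bin(m, r)` and `Bin(l, r)` variables. -/
lemma binomE_add (m l : ℕ) (r : ℝ) (f : ℕ → ℝ) :
    binomE (m + l) r f = binomE l r (fun j => binomE m r (fun k => f (k + j))) := by
  induction l generalizing f with
  | zero => simp [binomE, binomPMF]
  | succ l ih =>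
    rw [← add_assoc, binomE_succ, ih, ih, binomE_succ l]
    simp only [add_assoc]

lemma binomE_mono_trials (m l : ℕ) {r : ℝ} (h0 : 0 ≤ r) (h1 : r ≤ 1) {f : ℕ → ℝ}
    (hf : Monotone f) : binomE m r f ≤ binomE (m + l) r f := by
  rw [binomE_add]
  calc binomE m r f = binomE l r (fun _ => binomE m r f) := (binomE_const _ _ _).symm
    _ ≤ _ := binomE_mono h0 h1 fun j => binomE_mono h0 h1 fun k => hf (Nat.le_add_right k j)

lemma binomProb2_eq (m₁ m₂ : ℕ) (r₁ r₂ : ℝ) :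
    binomProb2 m₁ r₁ m₂ r₂ (fun s d => d < s) =
      binomE m₁ r₁ (fun s => binomE m₂ r₂ (fun d => if d < s then 1 else 0)) := by
  simp only [binomProb2, binomE, Finset.mul_sum]
  refine Finset.sum_congr rfl fun j _ => Finset.sum_congr rfl fun k _ => ?_
  by_cases h : k < j <;> simp [h]

/-- `P[S > D + e]` for independent `S ~ Bin(N + 1, q)` and `D ~ Bin(N, p)`. -/
noncomputable def tail (N : ℕ) (q p : ℝ) (e : ℕ) : ℝ :=
  binomE (N + 1) q (fun s => binomE N p (fun d => if d + e < s then 1 else 0))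

/-- Moving one success from `S ~ Bin(N + 1, q)` to `D ~ Bin(N, p)`: in the range
`d < s ≤ N` the product of binomial coefficients does not decrease, so the joint weight before the
move is at most `x` times the weight after it as soon as `x` dominates the odds ratio of `q` and
`p`. -/
lemma weight_shift {N s d : ℕ} {p q x : ℝ} (hq : 0 ≤ q) (hq1 : q ≤ 1) (hp0 : 0 ≤ p) (hp : p ≤ 1)
    (hx : q * (1 - p) ≤ x * ((1 - q) * p)) (hds : d < s) (hs : s ≤ N) :
    binomPMF (N + 1) q (s + 1) * binomPMF N p d ≤
      x * (binomPMF (N + 1) q s * binomPMF N p (d + 1)) := by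
  have hchoose : (N + 1).choose (s + 1) * N.choose d ≤ (N + 1).choose s * N.choose (d + 1) := by
    have a1 := Nat.choose_succ_right_eq (N + 1) s
    have a2 := Nat.choose_succ_right_eq N d
    have hcoef : (N + 1 - s) * (d + 1) ≤ (N - d) * (s + 1) :=
      Nat.mul_le_mul (by omega) (by omega)
    refine Nat.le_of_mul_le_mul_right (c := (s + 1) * (d + 1)) ?_ (by positivity)
    calc (N + 1).choose (s + 1) * N.choose d * ((s + 1) * (d + 1))
        = ((N + 1).choose (s + 1) * (s + 1)) * N.choose d * (d + 1) := by ring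
      _ = (N + 1).choose s * N.choose d * ((N + 1 - s) * (d + 1)) := by rw [a1]; ring
      _ ≤ (N + 1).choose s * N.choose d * ((N - d) * (s + 1)) := Nat.mul_le_mul_left _ hcoef
      _ = (N + 1).choose s * (N.choose d * (N - d)) * (s + 1) := by ring
      _ = (N + 1).choose s * N.choose (d + 1) * ((s + 1) * (d + 1)) := by rw [← a2]; ring
  have hchoose' : ((N + 1).choose (s + 1) : ℝ) * N.choose d ≤
      (N + 1).choose s * N.choose (d + 1) := by exact_mod_cast hchoose
  obtain ⟨u, rfl⟩ := Nat.exists_eq_add_of_le hs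
  obtain ⟨v, hv⟩ := Nat.exists_eq_add_of_lt (lt_of_lt_of_le hds hs)
  have e1 : s + u + 1 - (s + 1) = u := by omega
  have e2 : s + u + 1 - s = u + 1 := by omega
  have e3 : s + u - d = v + 1 := by omega
  have e4 : s + u - (d + 1) = v := by omega
  have hq' : 0 ≤ 1 - q := by linarith
  have hp' : 0 ≤ 1 - p := by linarith
  simp only [binomPMF, e1, e2, e3, e4]
  calc _ = ((s + u + 1).choose (s + 1) * (s + u).choose d : ℝ) *
        (q ^ s * (1 - q) ^ u * p ^ d * (1 - p) ^ v * (q * (1 - p))) := by ring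
    _ ≤ ((s + u + 1).choose s * (s + u).choose (d + 1) : ℝ) *
        (q ^ s * (1 - q) ^ u * p ^ d * (1 - p) ^ v * (x * ((1 - q) * p))) := by
      gcongr
    _ = _ := by ring

lemma tail_add_two_le (N e : ℕ) {p q x : ℝ} (hq : 0 ≤ q) (hq1 : q ≤ 1) (hp0 : 0 ≤ p)
    (hp : p ≤ 1) (hx0 : 0 ≤ x) (hx : q * (1 - p) ≤ x * ((1 - q) * p)) :
    tail N q p (e + 2) ≤ x * tail N q p e := by
  have hw : ∀ s d : ℕ, 0 ≤ binomPMF (N + 1) q s * (binomPMF N p d * if d + e < s then 1 else 0) :=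
    fun s d => mul_nonneg (binomPMF_nonneg hq hq1 s)
      (mul_nonneg (binomPMF_nonneg hp0 hp d) (by split_ifs <;> norm_num))
  simp only [tail, binomE, Finset.mul_sum]
  -- the left side is indexed by `(s + 1, d)`, to be compared with the index `(s, d + 1)`
  rw [Finset.sum_range_succ' _ (N + 1)]
  have hz : ∑ d ∈ Finset.range (N + 1), binomPMF (N + 1) q 0 *
      (binomPMF N p d * if d + (e + 2) < 0 then 1 else 0) = 0 := by simp
  rw [hz, add_zero, Finset.sum_range_succ _ (N + 1)]
  refine le_add_of_le_of_nonneg (Finset.sum_le_sum fun s hs => ?_)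
    (Finset.sum_nonneg fun d _ => mul_nonneg hx0 (hw _ _))
  have hs' : s ≤ N := by simpa [Nat.lt_succ_iff] using hs
  calc _ ≤ ∑ d ∈ Finset.range (N + 1), x * (binomPMF (N + 1) q s *
        (binomPMF N p (d + 1) * if d + 1 + e < s then 1 else 0)) := by
        refine Finset.sum_le_sum fun d _ => ?_
        by_cases h : d + 1 + e < s
        · rw [if_pos h, if_pos (by omega), mul_one, mul_one]
          exact weight_shift hq hq1 hp0 hp hx (by omega) hs'
        · rw [if_neg h, if_neg (by omega)]
          simp
    _ = ∑ d ∈ Finset.range N, x * (binomPMF (N + 1) q s *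
        (binomPMF N p (d + 1) * if d + 1 + e < s then 1 else 0)) := by
        rw [Finset.sum_range_succ, binomPMF_eq_zero p (Nat.lt_succ_self N)]
        simp
    _ ≤ _ := by
        rw [Finset.sum_range_succ' _ N]
        exact le_add_of_nonneg_right (mul_nonneg hx0 (hw _ _))

lemma tail_nonneg (N e : ℕ) {p q : ℝ} (hq : 0 ≤ q) (hq1 : q ≤ 1) (hp0 : 0 ≤ p)
    (hp : p ≤ 1) : 0 ≤ tail N q p e :=
  binomE_nonneg hq hq1 fun s => binomE_nonneg hp0 hp fun d => by split_ifs <;> norm_num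

lemma tail_le_pow (N e : ℕ) {p q ρ : ℝ} (hq : 0 ≤ q) (hq1 : q ≤ 1) (hp0 : 0 ≤ p)
    (hp : p ≤ 1) (hρ0 : 0 ≤ ρ) (hρ1 : ρ ≤ 1) (hρ : q * (1 - p) ≤ ρ ^ 2 * ((1 - q) * p)) :
    ρ * tail N q p e ≤ ρ ^ e * tail N q p 0 := by
  induction e using Nat.twoStepInduction with
  | zero =>
    rw [pow_zero]
    exact mul_le_mul_of_nonneg_right hρ1 (tail_nonneg N 0 hq hq1 hp0 hp)
  | one =>
    rw [pow_one]
    refine mul_le_mul_of_nonneg_left ?_ hρ0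
    refine binomE_mono hq hq1 fun s => binomE_mono hp0 hp fun d => ?_
    split_ifs <;> first | omega | norm_num
  | more e ih _ =>
    calc ρ * tail N q p (e + 2) ≤ ρ * (ρ ^ 2 * tail N q p e) :=
          mul_le_mul_of_nonneg_left (tail_add_two_le N e hq hq1 hp0 hp (sq_nonneg ρ) hρ) hρ0
      _ = ρ ^ 2 * (ρ * tail N q p e) := by ring
      _ ≤ ρ ^ 2 * (ρ ^ e * tail N q p 0) := mul_le_mul_of_nonneg_left ih (sq_nonneg ρ)
      _ = ρ ^ (e + 2) * tail N q p 0 := by ring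

/-- Integrating `tail_le_pow` over the `Δ` extra `p`-trials, which yields the generating function of
`Bin(Δ, p)` at `ρ`. -/
lemma lower_tail_le (N Δ : ℕ) {p q ρ : ℝ} (hq : 0 ≤ q) (hq1 : q ≤ 1) (hp0 : 0 ≤ p)
    (hp : p ≤ 1) (hρ0 : 0 ≤ ρ) (hρ1 : ρ ≤ 1) (hρ : q * (1 - p) ≤ ρ ^ 2 * ((1 - q) * p)) :
    ρ * binomProb2 (N + 1) q (N + Δ) p (fun s d => d < s) ≤
      (1 - p * (1 - ρ)) ^ Δ * tail N q p 0 := by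
  have h : binomProb2 (N + 1) q (N + Δ) p (fun s d => d < s) =
      binomE Δ p (fun e => tail N q p e) := by
    rw [binomProb2_eq]
    simp only [binomE_add N Δ p]
    rw [binomE_comm]
    rfl
  rw [h, ← binomE_pow, ← binomE_mul_const, mul_comm, ← binomE_mul_const]
  refine binomE_mono hp0 hp fun e => ?_
  rw [mul_comm]
  exact tail_le_pow N e hq hq1 hp0 hp hρ0 hρ1 hρ

lemma tail_le_upper (N Δ : ℕ) {p q : ℝ} (hq : 0 ≤ q) (hq1 : q ≤ 1) (hp0 : 0 ≤ p) (hp : p ≤ 1) :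
    tail N q p 0 ≤ binomProb2 (N + 1 + Δ) q N p (fun t d => d < t) := by
  rw [binomProb2_eq]
  refine binomE_mono_trials (N + 1) Δ hq hq1 fun a b hab => binomE_mono hp0 hp fun d => ?_
  split_ifs <;> first | omega | norm_num

/-- the key estimate in the proof of Proposition 3.5.
Fix constants `0 < q < p ≤ 1` and `δ > 0`.  There exists `L > 0` such that for all `n ∈ ℕ` and
all integers `Δ` with `Δ ≥ δ·n`, one has
`n²·P[Bin(n, q) > Bin(n+Δ−1, p)] ≤ L·exp(−n/L)·P[Bin(n+Δ, q) > Bin(n−1, p)]`,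
where within each probability the two binomial random variables are independent. -/
theorem binomial_cross_tail_comparison
    (p q δ : ℝ) (hq : 0 < q) (hqp : q < p) (hp : p ≤ 1) (hδ : 0 < δ) :
    ∃ L : ℝ, 0 < L ∧ ∀ n : ℕ, ∀ Δ : ℕ, δ * (n : ℝ) ≤ (Δ : ℝ) →
      (n : ℝ) ^ 2 * binomProb2 n q (n + Δ - 1) p (fun s d => d < s)
        ≤ L * Real.exp (-(n : ℝ) / L) *
          binomProb2 (n + Δ) q (n - 1) p (fun t d => d < t) := by
  have hp0 : 0 < p := hq.trans hqp
  have hq1 : q < 1 := hqp.trans_le hp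
  -- with `r` the odds ratio, `ρ = (1 + r) / 2` satisfies `ρ² ≥ r` and stays positive when `p = 1`
  obtain ⟨ρ, hρ0, hρ1, hρ⟩ :
      ∃ ρ : ℝ, 0 < ρ ∧ ρ < 1 ∧ q * (1 - p) ≤ ρ ^ 2 * ((1 - q) * p) := by
    have hden : 0 < (1 - q) * p := mul_pos (by linarith) hp0
    set r := q * (1 - p) / ((1 - q) * p) with hr
    have hr0 : 0 ≤ r := div_nonneg (mul_nonneg hq.le (by linarith)) hden.le
    have hr1 : r < 1 := by
      rw [hr, div_lt_one hden]
      nlinarith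
    refine ⟨(1 + r) / 2, by linarith, by linarith, ?_⟩
    have : q * (1 - p) = r * ((1 - q) * p) := by rw [hr, div_mul_cancel₀ _ hden.ne']
    rw [this]
    exact mul_le_mul_of_nonneg_right (by nlinarith [sq_nonneg (1 - r)]) hden.le
  -- half of the exponential rate; the other half pays for `n²`
  set a := p * (1 - ρ) * δ / 2 with ha
  have hc : 0 < p * (1 - ρ) := mul_pos hp0 (by linarith)
  have ha0 : 0 < a := by positivity
  have hK : 0 < 2 / (a ^ 2 * ρ) := by positivity
  refine ⟨2 / (a ^ 2 * ρ) + 1 / a, by positivity, ?_⟩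
  intro n Δ hΔ
  set L := 2 / (a ^ 2 * ρ) + 1 / a with hL
  have hL0 : 0 < L := by positivity
  rcases n with _ | N
  · have : 0 ≤ binomProb2 (0 + Δ) q (0 - 1) p (fun t d => d < t) := by
      rw [binomProb2_eq]
      exact binomE_nonneg hq.le hq1.le fun s => binomE_nonneg hp0.le hp fun d => by
        split_ifs <;> norm_num
    simp only [Nat.cast_zero, ne_eq, OfNat.ofNat_ne_zero, not_false_eq_true, zero_pow, zero_mul]
    positivity
  have e1 : N + 1 + Δ - 1 = N + Δ := by omega
  rw [e1, Nat.add_sub_cancel]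
  have hA := lower_tail_le N Δ hq.le hq1.le hp0.le hp hρ0.le hρ1.le hρ
  have hB := tail_le_upper N Δ hq.le hq1.le hp0.le hp
  have hT := tail_nonneg N 0 hq.le hq1.le hp0.le hp
  set A := binomProb2 (N + 1) q (N + Δ) p (fun s d => d < s)
  set B := binomProb2 (N + 1 + Δ) q N p (fun t d => d < t)
  set T := tail N q p 0
  set x : ℝ := ((N + 1 : ℕ) : ℝ) with hx
  have hx0 : 0 ≤ x := Nat.cast_nonneg _
  have hpow : (1 - p * (1 - ρ)) ^ Δ ≤ Real.exp (-(2 * (a * x))) := by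
    have hb : 0 ≤ 1 - p * (1 - ρ) := by nlinarith
    calc (1 - p * (1 - ρ)) ^ Δ ≤ Real.exp (-(p * (1 - ρ))) ^ Δ :=
          pow_le_pow_left₀ hb (Real.one_sub_le_exp_neg _) Δ
      _ = Real.exp (-(p * (1 - ρ) * Δ)) := by rw [← Real.exp_nat_mul]; ring_nf
      _ ≤ _ := by
        apply Real.exp_le_exp.2
        have := mul_le_mul_of_nonneg_left hΔ hc.le
        have h2 : 2 * (a * x) = p * (1 - ρ) * (δ * x) := by rw [ha]; ring
        linarith
  have hsq : x ^ 2 ≤ 2 / a ^ 2 * Real.exp (a * x) := by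
    have h := Real.quadratic_le_exp_of_nonneg (mul_nonneg ha0.le hx0)
    have h2 : (a * x) ^ 2 / 2 ≤ Real.exp (a * x) := by nlinarith [mul_nonneg ha0.le hx0]
    calc x ^ 2 = 2 / a ^ 2 * ((a * x) ^ 2 / 2) := by field_simp
      _ ≤ _ := by gcongr
  have hexp : Real.exp (-(a * x)) ≤ Real.exp (-x / L) := by
    apply Real.exp_le_exp.2
    have h1 : 1 ≤ a * L := by
      have : a * L = a * (2 / (a ^ 2 * ρ)) + 1 := by rw [hL, mul_add, mul_one_div_cancel ha0.ne']
      nlinarith [mul_pos ha0 hK]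
    rw [neg_div, neg_le_neg_iff, div_le_iff₀ hL0]
    nlinarith
  have hA' : A ≤ ρ⁻¹ * (Real.exp (-(2 * (a * x))) * T) := by
    rw [le_inv_mul_iff₀ hρ0]
    exact hA.trans (mul_le_mul_of_nonneg_right hpow hT)
  calc x ^ 2 * A ≤ x ^ 2 * (ρ⁻¹ * (Real.exp (-(2 * (a * x))) * T)) := by gcongr
    _ ≤ 2 / a ^ 2 * Real.exp (a * x) * (ρ⁻¹ * (Real.exp (-(2 * (a * x))) * T)) := by gcongr
    _ = 2 / (a ^ 2 * ρ) * (Real.exp (a * x) * Real.exp (-(2 * (a * x)))) * T := by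
        field_simp
    _ = 2 / (a ^ 2 * ρ) * Real.exp (-(a * x)) * T := by
        rw [← Real.exp_add]; ring_nf
    _ ≤ L * Real.exp (-x / L) * B := by
        have : 2 / (a ^ 2 * ρ) ≤ L := by rw [hL]; linarith [one_div_pos.2 ha0]
        gcongr
end

section
/- Fix constants 0 < q < p < 1 and K > 0, and set C := q³/(2(1−q)p²). There exists M > 0 such that for all sufficiently large n, all integers Δ ≥ 0 with 0 ≤ Δ' ≤ K·√(n·log n), and all real p̃ with |p̃ − p| ≤ K·(log n)/n, one has P[Bin(n+Δ, q) = ⌊n·p̃⌋] ≥ (1/(M·√n))·exp(−C·Δ'²·(n+Δ)/n²). -/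
/-!
The point mass of `Bin(m, q)` at `k`, with `m = n + Δ` and `k = ⌊np'⌋`, is estimated through
Stirling's formula. By `log_choose_ge`,
`P[Bin(m, q) = k] ≥ e⁻² k^(-1/2) exp(-E)`, where
`E = k log (k/(mq)) + (m-k) log ((m-k)/(m(1-q)))` is `m` times the relative entropy of `k/m` with
respect to `q`. Writing `k = mq + d`, Taylor expansion gives `E ≤ d²/(2mq(1-q)) + O(|d|³/m²)`
(`log_binomPMF_ge`).

Since `qm = pn - qΔ'`, the deviation is `d = qΔ' + e` with `e = k - pn = O(log n)`. Replacing `1/m`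
by `m/(pn/q)²` in `q²Δ'²/(2mq(1-q))` produces exactly the exponent `C Δ'² m / n²`, and the remaining
terms are `O((Δ'³ + nΔ'|e| + n e²)/n²)` (`gaussian_exponent_le`). As `Δ' = O(√(n log n))` and
`|d| = O(√(n log n))`, all errors are `O(1)` as soon as `(log n)³ ≤ n`, so they are absorbed in `M`.
-/

open Finset

/-- Upper Stirling bound, `k! ≤ e √k (k/e)^k` in logarithmic form. -/
lemma log_factorial_le_stirling {k : ℕ} (hk : k ≠ 0) :
    Real.log (k.factorial : ℝ) ≤ 1 + k * Real.log k - k + Real.log k / 2 := by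
  obtain ⟨j, rfl⟩ := Nat.exists_eq_succ_of_ne_zero hk
  have h1 : Real.log (Stirling.stirlingSeq (j + 1)) ≤ Real.log (Stirling.stirlingSeq 1) :=
    Stirling.log_stirlingSeq'_antitone (Nat.zero_le j)
  have hpos : (0 : ℝ) < ((j + 1 : ℕ) : ℝ) := by positivity
  rw [Stirling.log_stirlingSeq_formula, Stirling.stirlingSeq_one,
    Real.log_div (Real.exp_pos 1).ne' (by positivity), Real.log_exp,
    Real.log_sqrt (by norm_num), Real.log_mul (by norm_num) hpos.ne',
    Real.log_div hpos.ne' (Real.exp_pos 1).ne', Real.log_exp] at h1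
  simp only [Nat.succ_eq_add_one]
  linarith

/-- `C(k+l, k) ≥ e⁻² k^(-1/2) (k+l)^(k+l) / (k^k l^l)` in logarithmic form. -/
lemma log_choose_ge {k l : ℕ} (hk : k ≠ 0) (hl : l ≠ 0) :
    ((k : ℝ) + l) * Real.log ((k : ℝ) + l) - k * Real.log k - l * Real.log l
      - Real.log k / 2 - 2 ≤ Real.log ((k + l).choose k : ℝ) := by
  have h1 := log_factorial_le_stirling hk
  have h2 := log_factorial_le_stirling hl
  have h3 := Stirling.le_log_factorial_stirling (n := k + l) (by omega)
  have h4 : 0 ≤ Real.log (2 * Real.pi) :=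
    Real.log_nonneg (by linarith [Real.pi_gt_three])
  have h5 : Real.log (l : ℝ) ≤ Real.log ((k : ℝ) + l) :=
    Real.log_le_log (by positivity) (by linarith [(Nat.cast_nonneg k : (0 : ℝ) ≤ k)])
  have h6 : Real.log ((k + l).factorial : ℝ) = Real.log ((k + l).choose k : ℝ)
      + Real.log (k.factorial : ℝ) + Real.log (l.factorial : ℝ) := by
    have hc : ((k + l).choose k : ℝ) ≠ 0 := by
      exact_mod_cast (Nat.choose_pos (Nat.le_add_right k l)).ne'
    rw [← Real.log_mul hc (by positivity), ← Real.log_mul (by positivity) (by positivity)]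
    congr 1
    have := Nat.choose_mul_factorial_mul_factorial (Nat.le_add_right k l)
    rw [Nat.add_sub_cancel_left] at this
    exact_mod_cast this.symm
  push_cast at h3
  linarith

lemma one_add_mul_log_le {x : ℝ} (hx : |x| ≤ 1 / 2) :
    (1 + x) * Real.log (1 + x) ≤ x + x ^ 2 / 2 + 4 * |x| ^ 3 := by
  have h := Real.abs_log_sub_add_sum_range_le (x := -x) (by rw [abs_neg]; linarith) 2
  simp only [Finset.sum_range_succ, Finset.sum_range_zero, abs_neg, sub_neg_eq_add] at h
  norm_num at h
  have h0 := abs_nonneg x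
  have h3 : |x| ^ 3 / (1 - |x|) ≤ 2 * |x| ^ 3 := by
    rw [div_le_iff₀ (by linarith)]
    nlinarith [pow_nonneg h0 3]
  have h4 := (abs_le.1 h).2
  have hb := abs_le.1 hx
  have h5 : Real.log (1 + x) ≤ x - x ^ 2 / 2 + 2 * |x| ^ 3 := by linarith
  have h6 : (1 + x) * Real.log (1 + x) ≤ (1 + x) * (x - x ^ 2 / 2 + 2 * |x| ^ 3) :=
    mul_le_mul_of_nonneg_left h5 (by linarith)
  have h7 : -x ^ 3 ≤ |x| ^ 3 := by
    rw [← abs_pow]; exact neg_le_abs _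
  have h8 : x * |x| ^ 3 ≤ 1 / 2 * |x| ^ 3 :=
    mul_le_mul_of_nonneg_right hb.2 (pow_nonneg h0 3)
  nlinarith [pow_nonneg h0 3]

/-- One half of the relative-entropy expansion, rescaled by `a`. -/
lemma mul_log_div_le {a d : ℝ} (ha : 0 < a) (hd : |d| ≤ a / 2) :
    (a + d) * Real.log ((a + d) / a) ≤ d + d ^ 2 / (2 * a) + 4 * |d| ^ 3 / a ^ 2 := by
  have h := one_add_mul_log_le (x := d / a) (by
    rw [abs_div, abs_of_pos ha, div_le_iff₀ ha]; linarith)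
  have e : (a + d) / a = 1 + d / a := by field_simp
  rw [abs_div, abs_of_pos ha] at h
  rw [e]
  calc (a + d) * Real.log (1 + d / a) = a * ((1 + d / a) * Real.log (1 + d / a)) := by
        field_simp
    _ ≤ a * (d / a + (d / a) ^ 2 / 2 + 4 * (|d| / a) ^ 3) :=
        mul_le_mul_of_nonneg_left h ha.le
    _ = _ := by field_simp

/-- Lower bound for the point mass of `Bin(k+l, q)` at `k = (k+l)q + d`: the relative
entropy is replaced by its quadratic term, with a cubic error. -/
lemma log_binomPMF_ge {k l : ℕ} {q d : ℝ} (hq : 0 < q) (hq1 : q < 1) (hk : k ≠ 0) (hl : l ≠ 0)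
    (hd : (k : ℝ) = ((k : ℝ) + l) * q + d)
    (h1 : |d| ≤ ((k : ℝ) + l) * q / 2) (h2 : |d| ≤ ((k : ℝ) + l) * (1 - q) / 2) :
    -2 - Real.log k / 2 - d ^ 2 / (2 * ((k : ℝ) + l) * q * (1 - q))
      - 4 * |d| ^ 3 * (1 / q ^ 2 + 1 / (1 - q) ^ 2) / ((k : ℝ) + l) ^ 2
      ≤ Real.log (binomPMF (k + l) q k) := by
  have hk0 : (0 : ℝ) < k := by positivity
  have hl0 : (0 : ℝ) < l := by positivity
  have hq' : 0 < 1 - q := by linarith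
  have hm : (0 : ℝ) < (k : ℝ) + l := by positivity
  have hc : ((k + l).choose k : ℝ) ≠ 0 := by
    exact_mod_cast (Nat.choose_pos (Nat.le_add_right k l)).ne'
  have hlog : Real.log (binomPMF (k + l) q k) = Real.log ((k + l).choose k : ℝ)
      + k * Real.log q + l * Real.log (1 - q) := by
    unfold binomPMF
    rw [Nat.add_sub_cancel_left, Real.log_mul (by positivity) (by positivity),
      Real.log_mul hc (by positivity), Real.log_pow, Real.log_pow]
  have A := mul_log_div_le (a := ((k : ℝ) + l) * q) (by positivity) h1
  have B := mul_log_div_le (a := ((k : ℝ) + l) * (1 - q)) (d := -d) (by positivity)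
    (by rwa [abs_neg])
  have e1 : ((k : ℝ) + l) * q + d = k := hd.symm
  have e2 : ((k : ℝ) + l) * (1 - q) + -d = l := by linarith
  rw [e1, Real.log_div hk0.ne' (by positivity), Real.log_mul hm.ne' hq.ne'] at A
  rw [e2, Real.log_div hl0.ne' (by positivity), Real.log_mul hm.ne' hq'.ne', abs_neg] at B
  have C := log_choose_ge hk hl
  have E1 : d ^ 2 / (2 * ((k : ℝ) + l) * q * (1 - q)) =
      d ^ 2 / (2 * (((k : ℝ) + l) * q)) + (-d) ^ 2 / (2 * (((k : ℝ) + l) * (1 - q))) := by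
    field_simp; ring
  have E2 : 4 * |d| ^ 3 * (1 / q ^ 2 + 1 / (1 - q) ^ 2) / ((k : ℝ) + l) ^ 2 =
      4 * |d| ^ 3 / (((k : ℝ) + l) * q) ^ 2 + 4 * |d| ^ 3 / (((k : ℝ) + l) * (1 - q)) ^ 2 := by
    field_simp
  rw [hlog, E1, E2]
  linarith

/-- The Gaussian exponent `d² / (2mq(1-q))` at `d = qD + e` exceeds the target exponent by
lower-order terms only. The main term uses `1/m = m/m²` with `m² ≈ (pn/q)²`. -/
lemma gaussian_exponent_le {n m D e p q : ℝ} (hn : 0 < n) (hq : 0 < q) (hq1 : q < 1) (hp : 0 < p)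
    (hD : 0 ≤ D) (hm : n ≤ m) (hmD : p * n = q * (m + D)) :
    (q * D + e) ^ 2 / (2 * m * q * (1 - q)) ≤
      q ^ 3 / (2 * (1 - q) * p ^ 2) * D ^ 2 * m / n ^ 2
        + q ^ 2 / ((1 - q) * p) * (D ^ 3 / n ^ 2)
        + 1 / (q * (1 - q)) * (D * |e| / n) + 1 / (q * (1 - q)) * (e ^ 2 / n) := by
  have hq' : 0 < 1 - q := by linarith
  have hm0 : 0 < m := by linarith
  have key : q * D ^ 2 / (2 * m * (1 - q)) ≤
      q ^ 3 / (2 * (1 - q) * p ^ 2) * D ^ 2 * m / n ^ 2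
        + q ^ 2 / ((1 - q) * p) * (D ^ 3 / n ^ 2) := by
    have i1 : q * D ^ 2 / (2 * m * (1 - q)) = q * D ^ 2 / (2 * (1 - q)) * (1 / m) := by
      field_simp
    have i2 : q ^ 3 / (2 * (1 - q) * p ^ 2) * D ^ 2 * m / n ^ 2
        + q ^ 2 / ((1 - q) * p) * (D ^ 3 / n ^ 2)
        = q * D ^ 2 / (2 * (1 - q)) * (q ^ 2 * m / (p * n) ^ 2 + 2 * q * D / (p * n * n)) := by
      field_simp
    rw [i1, i2]
    apply mul_le_mul_of_nonneg_left _ (by positivity)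
    have i3 : 2 * q * D / (p * n * m) ≤ 2 * q * D / (p * n * n) := by gcongr
    have i4 : 1 / m ≤ q ^ 2 * m / (p * n) ^ 2 + 2 * q * D / (p * n * m) := by
      have hpn : 0 < p * n := by positivity
      have : q ^ 2 * m / (p * n) ^ 2 + 2 * q * D / (p * n * m) - 1 / m
          = (q ^ 2 * m ^ 2 + 2 * q * D * (p * n) - (p * n) ^ 2) / ((p * n) ^ 2 * m) := by
        field_simp
      have h0 : 0 ≤ (q ^ 2 * m ^ 2 + 2 * q * D * (p * n) - (p * n) ^ 2) / ((p * n) ^ 2 * m) := by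
        apply div_nonneg _ (by positivity)
        rw [hmD]
        nlinarith [mul_nonneg hq.le hD, sq_nonneg (q * D)]
      linarith
    linarith
  have hle : (q * D + e) ^ 2 ≤ q ^ 2 * D ^ 2 + 2 * (D * |e|) + 2 * e ^ 2 := by
    have : q * (D * e) ≤ 1 * (D * |e|) := by
      have : D * e ≤ D * |e| := mul_le_mul_of_nonneg_left (le_abs_self e) hD
      have h0 : 0 ≤ D * |e| := by positivity
      nlinarith
    nlinarith [sq_nonneg e]
  calc (q * D + e) ^ 2 / (2 * m * q * (1 - q))
      ≤ (q ^ 2 * D ^ 2 + 2 * (D * |e|) + 2 * e ^ 2) / (2 * m * q * (1 - q)) := by gcongr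
    _ = q * D ^ 2 / (2 * m * (1 - q)) + 1 / (q * (1 - q)) * (D * |e| / m)
        + 1 / (q * (1 - q)) * (e ^ 2 / m) := by field_simp
    _ ≤ q * D ^ 2 / (2 * m * (1 - q)) + 1 / (q * (1 - q)) * (D * |e| / n)
        + 1 / (q * (1 - q)) * (e ^ 2 / n) := by gcongr
    _ ≤ _ := by linarith

lemma binomProb_singleton {m k : ℕ} (r : ℝ) (h : k ≤ m) :
    binomProb m r (fun j => j = k) = binomPMF m r k := by
  unfold binomProb
  rw [Finset.sum_eq_single k]
  · simp
  · intro b _ hb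
    simp [hb]
  · intro hk
    exact absurd (Finset.mem_range.2 (by omega)) hk

lemma eventually_log_large (L₀ : ℝ) :
    ∃ N : ℕ, ∀ n : ℕ, N ≤ n → L₀ ≤ Real.log n ∧ Real.log n ^ 3 ≤ n := by
  have h1 := (Real.tendsto_log_atTop.comp tendsto_natCast_atTop_atTop).eventually_ge_atTop L₀
  have h2 := ((Real.isLittleO_pow_log_id_atTop (n := 3)).comp_tendsto
    (tendsto_natCast_atTop_atTop (R := ℝ))).bound (c := 1) one_pos
  obtain ⟨N, hN⟩ := Filter.eventually_atTop.1 (h1.and h2)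
  refine ⟨N, fun n hn => ⟨(hN n hn).1, ?_⟩⟩
  have := (hN n hn).2
  simp only [Function.comp, id, one_mul, Real.norm_eq_abs, Nat.abs_cast] at this
  exact (le_abs_self _).trans this

set_option maxHeartbeats 1000000 in
/-- equation (2.4) / `eqequaltonp` in the proof of Lemma 2.8.
Fix constants `0 < q < p < 1` and `K > 0`, and set `C := q³/(2(1−q)p²)`.  There exists `M > 0`
such that for all sufficiently large `n`, all integers `Δ ≥ 0` with `0 ≤ Δ' ≤ K·√(n·log n)`
(where `Δ' = ((p−q)/q)·n − Δ`), and all real `p'` with `|p' − p| ≤ K·(log n)/n`, one has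
`P[Bin(n+Δ, q) = ⌊n·p'⌋] ≥ (1/(M·√n))·exp(−C·Δ'²·(n+Δ)/n²)`. -/
theorem binomial_point_mass_lower_bound
    (p q K : ℝ) (hq : 0 < q) (hqp : q < p) (hp : p < 1) (hK : 0 < K) :
    ∃ M : ℝ, 0 < M ∧ ∃ N : ℕ, ∀ n : ℕ, N ≤ n → ∀ Δ : ℕ,
      0 ≤ ((p - q) / q) * n - Δ →
      ((p - q) / q) * n - Δ ≤ K * Real.sqrt (n * Real.log n) →
      ∀ p' : ℝ, |p' - p| ≤ K * Real.log n / n →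
        binomProb (n + Δ) q (fun j => j = ⌊(n : ℝ) * p'⌋₊)
          ≥ 1 / (M * Real.sqrt n) *
            Real.exp (-(q ^ 3 / (2 * (1 - q) * p ^ 2)) *
              (((p - q) / q) * n - Δ) ^ 2 * ((n : ℝ) + Δ) / (n : ℝ) ^ 2) := by
  have hq1 : q < 1 := hqp.trans hp
  have hq' : 0 < 1 - q := by linarith
  have hp' : 0 < 1 - p := by linarith
  have hp0 : 0 < p := hq.trans hqp
  -- The four summands of `B` bound the four error terms of `gaussian_exponent_le` and
  -- `log_binomPMF_ge`, after inserting `D ≤ K S`, `|e| ≤ (K+1) L`, `|d| ≤ (2K+1) S`.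
  set B : ℝ := q ^ 2 / ((1 - q) * p) * K ^ 3 + 1 / (q * (1 - q)) * (K * (K + 1))
    + 1 / (q * (1 - q)) * (K + 1) ^ 2
    + 4 * (1 / q ^ 2 + 1 / (1 - q) ^ 2) * (2 * K + 1) ^ 3 with hB
  refine ⟨Real.exp (2 + B), Real.exp_pos _, ?_⟩
  -- `log n ≥ L₀` and `(log n)³ ≤ n` together give `k ≤ n` (from the second summand of `L₀`) and
  -- `|d| ≤ n q (1-q) / 4` (from the third).
  set L₀ : ℝ := 1 + K / (1 - p) + 4 * (2 * K + 1) / (q * (1 - q)) with hL₀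
  obtain ⟨N, hN⟩ := eventually_log_large L₀
  refine ⟨max N 1, fun n hn Δ hD0 hDK p' hpp => ?_⟩
  obtain ⟨hL, hL3⟩ := hN n (le_of_max_le_left hn)
  have hn1 : 1 ≤ n := le_of_max_le_right hn
  have hn0 : (0 : ℝ) < n := by exact_mod_cast hn1
  set x : ℝ := (n : ℝ) with hx
  set L : ℝ := Real.log x with hLdef
  set S : ℝ := Real.sqrt (x * L) with hS
  set D : ℝ := (p - q) / q * x - Δ with hD
  have hL1 : 1 ≤ L := by
    have : 0 ≤ K / (1 - p) + 4 * (2 * K + 1) / (q * (1 - q)) := by positivity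
    linarith
  have hLa : K ≤ (1 - p) * L := by
    have : 0 ≤ 4 * (2 * K + 1) / (q * (1 - q)) := by positivity
    have : K / (1 - p) ≤ L := by linarith
    rw [div_le_iff₀ hp'] at this; linarith
  have hLb : 4 * (2 * K + 1) ≤ q * (1 - q) * L := by
    have : 0 ≤ K / (1 - p) := by positivity
    have : 4 * (2 * K + 1) / (q * (1 - q)) ≤ L := by linarith
    rw [div_le_iff₀ (by positivity)] at this; linarith
  have hS0 : 0 ≤ S := Real.sqrt_nonneg _
  have hS2 : S ^ 2 = x * L := Real.sq_sqrt (by positivity)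
  have hSL : S * L ≤ x := by
    apply le_of_sq_le_sq _ hn0.le
    calc (S * L) ^ 2 = x * L ^ 3 := by rw [mul_pow, hS2]; ring
      _ ≤ x * x := by gcongr
      _ = x ^ 2 := by ring
  have hLx : L ^ 2 ≤ x := le_trans (pow_le_pow_right₀ hL1 (by norm_num)) hL3
  have hLS : L ≤ S := by
    apply le_of_sq_le_sq _ hS0
    rw [hS2]
    nlinarith
  have hS3 : S ^ 3 ≤ x ^ 2 := by
    calc S ^ 3 = x * (S * L) := by rw [pow_succ, hS2]; ring
      _ ≤ x * x := by gcongr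
      _ = x ^ 2 := by ring
  have hKL : K * L ≤ (1 - p) * x := by
    calc K * L ≤ (1 - p) * L * L := by gcongr
      _ = (1 - p) * L ^ 2 := by ring
      _ ≤ (1 - p) * x := by gcongr
  have hxp : |x * p' - x * p| ≤ K * L := by
    rw [← mul_sub, abs_mul, abs_of_pos hn0]
    rw [le_div_iff₀ hn0] at hpp
    linarith
  obtain ⟨hxp1, hxp2⟩ := abs_le.1 hxp
  have hSsmall : (2 * K + 1) * S ≤ x * (q * (1 - q)) / 4 := by
    have : 4 * (2 * K + 1) * S ≤ q * (1 - q) * L * S := by gcongr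
    have : q * (1 - q) * (S * L) ≤ q * (1 - q) * x := by gcongr
    linarith
  have hKLS : K * L ≤ K * S := by gcongr
  have hqq : q * (1 - q) ≤ q := by nlinarith
  have hqq2 : q * (1 - q) ≤ 1 - q := by nlinarith
  -- Needed because `⌊·⌋₊` truncates negative reals to `0`.
  have hxp0 : 0 ≤ x * p' := by nlinarith [mul_le_mul_of_nonneg_left hqq hn0.le]
  set k : ℕ := ⌊x * p'⌋₊ with hk
  have hk1 : (k : ℝ) ≤ x * p' := Nat.floor_le hxp0
  have hk2 : x * p' < k + 1 := Nat.lt_floor_add_one _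
  -- With `k ≤ n`, the factor `k^(-1/2)` is at least `n^(-1/2)`.
  have hkx : (k : ℝ) ≤ x := by linarith
  set m : ℝ := x + Δ with hm
  have hmx : x ≤ m := by
    have : (0 : ℝ) ≤ Δ := Nat.cast_nonneg _
    linarith
  have hmD : p * x = q * (m + D) := by
    rw [hm, hD]; field_simp; ring
  set e : ℝ := k - x * p with he
  have heL : |e| ≤ (K + 1) * L := by
    have hK1 : (K + 1) * L = K * L + L := by ring
    rw [abs_le, hK1]; constructor <;> linarith
  have heS : |e| ≤ (K + 1) * S := heL.trans (by gcongr)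
  set d : ℝ := q * D + e with hd
  have hkd : (k : ℝ) = m * q + d := by
    rw [hd, he]; linarith
  have hdS : |d| ≤ (2 * K + 1) * S := by
    calc |d| ≤ |q * D| + |e| := abs_add_le _ _
      _ = q * D + |e| := by rw [abs_of_nonneg (by positivity)]
      _ ≤ 1 * (K * S) + (K + 1) * S := by gcongr
      _ = _ := by ring
  have hm0 : 0 < m := by linarith
  have hqq0 : 0 < q * (1 - q) := by positivity
  have hKS0 : 0 ≤ (2 * K + 1) * S := by positivity
  have hd1 : |d| ≤ m * q / 2 := by
    have := mul_le_mul hmx hqq hqq0.le hm0.le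
    linarith
  have hd2 : |d| ≤ m * (1 - q) / 2 := by
    have := mul_le_mul hmx hqq2 hqq0.le hm0.le
    linarith
  have hmq : 0 < m * q := by positivity
  have hmq' : 0 < m * (1 - q) := by positivity
  have hk0 : (0 : ℝ) < k := by linarith [(abs_le.1 hd1).1]
  have hkm : (k : ℝ) < m := by linarith [(abs_le.1 hd2).2]
  have hkm' : k < n + Δ := by
    have : (k : ℝ) < ((n + Δ : ℕ) : ℝ) := by push_cast; exact hkm
    exact_mod_cast this
  obtain ⟨l, hl⟩ := Nat.exists_eq_add_of_lt hkm'
  have hl' : n + Δ = k + (l + 1) := by omega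
  have hml : (k : ℝ) + ((l + 1 : ℕ) : ℝ) = m := by
    rw [hm, hx]; exact_mod_cast hl'.symm
  have hkne : k ≠ 0 := by
    rintro h; rw [h] at hk0; simp at hk0
  have P := log_binomPMF_ge (k := k) (l := l + 1) (q := q) (d := d) hq hq1 hkne (by omega)
    (by rw [hml]; exact hkd) (by rw [hml]; exact hd1) (by rw [hml]; exact hd2)
  rw [hml, ← hl'] at P
  have G := gaussian_exponent_le (e := e) hn0 hq hq1 hp0 hD0 hmx hmD
  have c1 : D ^ 3 / x ^ 2 ≤ K ^ 3 := by
    rw [div_le_iff₀ (by positivity)]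
    calc D ^ 3 ≤ (K * S) ^ 3 := by gcongr
      _ = K ^ 3 * S ^ 3 := by ring
      _ ≤ _ := by gcongr
  have c2 : D * |e| / x ≤ K * (K + 1) := by
    rw [div_le_iff₀ hn0]
    calc D * |e| ≤ (K * S) * ((K + 1) * L) := by gcongr
      _ = K * (K + 1) * (S * L) := by ring
      _ ≤ _ := by gcongr
  have c3 : e ^ 2 / x ≤ (K + 1) ^ 2 := by
    rw [div_le_iff₀ hn0, ← sq_abs]
    calc |e| ^ 2 ≤ ((K + 1) * L) ^ 2 := by gcongr
      _ = (K + 1) ^ 2 * L ^ 2 := by ring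
      _ ≤ _ := by gcongr
  have c4 : |d| ^ 3 / m ^ 2 ≤ (2 * K + 1) ^ 3 := by
    rw [div_le_iff₀ (by positivity)]
    calc |d| ^ 3 ≤ ((2 * K + 1) * S) ^ 3 := by gcongr
      _ = (2 * K + 1) ^ 3 * S ^ 3 := by ring
      _ ≤ (2 * K + 1) ^ 3 * m ^ 2 := by
        have : S ^ 3 ≤ m ^ 2 := hS3.trans (by gcongr)
        gcongr
  have g1 : q ^ 2 / ((1 - q) * p) * (D ^ 3 / x ^ 2) ≤ q ^ 2 / ((1 - q) * p) * K ^ 3 := by gcongr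
  have g2 : 1 / (q * (1 - q)) * (D * |e| / x) ≤ 1 / (q * (1 - q)) * (K * (K + 1)) := by gcongr
  have g3 : 1 / (q * (1 - q)) * (e ^ 2 / x) ≤ 1 / (q * (1 - q)) * (K + 1) ^ 2 := by gcongr
  have g4 : 4 * |d| ^ 3 * (1 / q ^ 2 + 1 / (1 - q) ^ 2) / m ^ 2
      ≤ 4 * (1 / q ^ 2 + 1 / (1 - q) ^ 2) * (2 * K + 1) ^ 3 := by
    calc 4 * |d| ^ 3 * (1 / q ^ 2 + 1 / (1 - q) ^ 2) / m ^ 2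
        = 4 * (1 / q ^ 2 + 1 / (1 - q) ^ 2) * (|d| ^ 3 / m ^ 2) := by ring
      _ ≤ _ := by gcongr
  have hlogk : Real.log k ≤ L := Real.log_le_log hk0 hkx
  have hpos : 0 < binomPMF (n + Δ) q k := by
    unfold binomPMF
    have : (0 : ℝ) < ((n + Δ).choose k : ℝ) := by
      exact_mod_cast Nat.choose_pos hkm'.le
    positivity
  have hsqrt : Real.sqrt x = Real.exp (L / 2) := by
    rw [hLdef, ← Real.log_sqrt hn0.le, Real.exp_log (Real.sqrt_pos.2 hn0)]
  rw [binomProb_singleton q hkm'.le, hsqrt, ← Real.exp_add, one_div, ← Real.exp_neg,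
    ← Real.exp_add, ge_iff_le, ← Real.le_log_iff_exp_le hpos]
  have hT : -(q ^ 3 / (2 * (1 - q) * p ^ 2)) * D ^ 2 * m / x ^ 2
      = -(q ^ 3 / (2 * (1 - q) * p ^ 2) * D ^ 2 * m / x ^ 2) := by ring
  rw [hT]
  linarith
end

section
/- Fix constants 0 < q < p < 1 and set C' := q²/(2p(2−p−q)). Let (d_n) be any sequence of reals with d_n → ∞, and let Δ = Δ(n) be any sequence of nonnegative integers satisfying Δ(n) ≤ ((p−q)/q)·n − √(n·(log n + log log n + d_n)/C') for all large n. Then n·P[Bin(n+Δ, q) > Bin(n−1, p)] → 0 as n → ∞, where the two binomial random variables are independent. -/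
/-!
The proof is a Chernoff bound with a near-optimal tilt. For `X ~ Bin(n + Δ, q)` and
`Y ~ Bin(n - 1, p)`, Markov's inequality for `exp (l * (X - Y - 1))` with `l ≥ 0` bounds
`P[Y < X]` by a product of moment generating functions (`binomProb2_lt_le`). A second-order
expansion of the Bernoulli cumulant generating function (`bernoulli_mgf_le`) shows that the
exponent is at most `-l * t + l² / 2 * V + O(n * l³)`, where `t = q * √(n * L / C')` is the
guaranteed gap between the means and `V = n * p * (2 - p - q)` bounds the variance of `X - Y`, both
because `(n + Δ) * q ≤ n * p - t` (`chernoff_exponent`). The choice `l = t / V` makes the main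
term equal to `-t² / (2 * V) = -L`, by the definition of `C'`.

The cubic error is bounded only if `L³ = O(n)`. Since the hypothesis on `Δ` weakens when `d` is
decreased, `d n` can be replaced by `min (d n) (log n)`, and then `0 ≤ L ≤ 3 * log n`. Hence
`n * P[Y < X] ≤ n * exp (-L + O(1)) ≤ exp (O(1) - min (d n) (log n))`, which tends to `0`.
-/

open Finset

/-- The moment generating function of `Bin(m, r)`. -/
lemma sum_binomPMF_mul_exp (m : ℕ) (r μ : ℝ) :
    ∑ k ∈ Finset.range (m + 1), binomPMF m r k * Real.exp (μ * k) =
      (1 + r * (Real.exp μ - 1)) ^ m := by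
  have h : 1 + r * (Real.exp μ - 1) = r * Real.exp μ + (1 - r) := by ring
  rw [h, add_pow]
  refine Finset.sum_congr rfl fun k _ => ?_
  rw [binomPMF, mul_comm μ, Real.exp_nat_mul, mul_pow]
  ring

lemma binomProb2_nonneg {m₁ m₂ : ℕ} {r₁ r₂ : ℝ} (h₁ : 0 ≤ r₁) (h₁' : r₁ ≤ 1) (h₂ : 0 ≤ r₂)
    (h₂' : r₂ ≤ 1) (P : ℕ → ℕ → Prop) : 0 ≤ binomProb2 m₁ r₁ m₂ r₂ P := by
  unfold binomProb2
  refine Finset.sum_nonneg fun j _ => Finset.sum_nonneg fun k _ => ?_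
  exact Set.indicator_nonneg
    (fun _ _ => mul_nonneg (binomPMF_nonneg h₁ h₁' _) (binomPMF_nonneg h₂ h₂' _)) _

/-- Markov's inequality for `exp (l * (X - Y - 1))`; the shift by one is available because
`Y < X` means `X - Y ≥ 1`. -/
lemma binomProb2_lt_le {m₁ m₂ : ℕ} {r₁ r₂ l : ℝ} (h₁ : 0 ≤ r₁) (h₁' : r₁ ≤ 1) (h₂ : 0 ≤ r₂)
    (h₂' : r₂ ≤ 1) (hl : 0 ≤ l) :
    binomProb2 m₁ r₁ m₂ r₂ (fun x y => y < x) ≤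
      Real.exp (-l) * ((1 + r₁ * (Real.exp l - 1)) ^ m₁ *
        (1 + r₂ * (Real.exp (-l) - 1)) ^ m₂) := by
  rw [← sum_binomPMF_mul_exp, ← sum_binomPMF_mul_exp, Finset.sum_mul_sum, Finset.mul_sum]
  unfold binomProb2
  refine Finset.sum_le_sum fun j _ => ?_
  rw [Finset.mul_sum]
  refine Finset.sum_le_sum fun k _ => ?_
  have hj := binomPMF_nonneg (m := m₁) h₁ h₁' j
  have hk := binomPMF_nonneg (m := m₂) h₂ h₂' k
  have heq : Real.exp (-l) * (binomPMF m₁ r₁ j * Real.exp (l * j) *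
      (binomPMF m₂ r₂ k * Real.exp (-l * k))) =
      binomPMF m₁ r₁ j * binomPMF m₂ r₂ k * Real.exp (l * (j - k - 1)) := by
    rw [show l * ((j : ℝ) - k - 1) = -l + l * j + -l * k by ring, Real.exp_add, Real.exp_add]
    ring
  rw [heq]
  refine Set.indicator_apply_le' (fun h => ?_) (fun _ => by positivity)
  have h' : (k : ℝ) + 1 ≤ j := by exact_mod_cast (h : k < j)
  have : 1 ≤ Real.exp (l * ((j : ℝ) - k - 1)) :=
    Real.one_le_exp (mul_nonneg hl (by linarith))
  exact le_mul_of_one_le_right (mul_nonneg hj hk) this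

/-- Second-order expansion of the Bernoulli cumulant generating function, with an explicit cubic
error. Both signs of `μ` are needed: `μ = l` for `X` and `μ = -l` for `Y`. -/
lemma bernoulli_mgf_le {r μ : ℝ} (h0 : 0 ≤ r) (h1 : r ≤ 1) (hμ : |μ| ≤ 1 / 4) :
    1 + r * (Real.exp μ - 1) ≤
      Real.exp (r * μ + r * (1 - r) * μ ^ 2 / 2 + 20 * |μ| ^ 3) := by
  set w := Real.exp μ - 1 with hw
  set a := |μ| with ha
  have ha0 : 0 ≤ a := abs_nonneg _
  have hsq : μ ^ 2 = a ^ 2 := (sq_abs μ).symm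
  have hexp : |w - μ - μ ^ 2 / 2| ≤ a ^ 3 := by
    have h := Real.exp_bound (x := μ) (by linarith) (n := 3) (by norm_num)
    norm_num [Finset.sum_range_succ, Nat.factorial] at h
    rw [show w - μ - μ ^ 2 / 2 = Real.exp μ - (1 + μ + μ ^ 2 / 2) by rw [hw]; ring]
    refine h.trans ?_
    have : 0 ≤ a ^ 3 := by positivity
    linarith
  have ha3 : a ^ 3 ≤ a ^ 2 / 4 := by nlinarith [sq_nonneg a]
  have hwμ : |w - μ| ≤ a ^ 2 := by
    rw [abs_le] at hexp ⊢
    constructor <;> nlinarith [hexp.1, hexp.2, sq_nonneg a]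
  have hw2 : |w| ≤ 2 * a := by
    have : |w| ≤ |w - μ| + |μ| := by simpa using abs_add_le (w - μ) μ
    nlinarith
  have hx : |r * w| ≤ 2 * a := by
    rw [abs_mul, abs_of_nonneg h0]
    nlinarith [abs_nonneg w]
  have hxhalf : |r * w| ≤ 1 / 2 := by linarith
  have hlog : Real.log (1 + r * w) ≤ r * w - (r * w) ^ 2 / 2 + 16 * a ^ 3 := by
    have h := Real.abs_log_sub_add_sum_range_le (x := -(r * w))
      (by rw [abs_neg]; linarith) 2
    norm_num [Finset.sum_range_succ] at h
    have h2 : |r * w| ^ 3 / (1 - |r * w|) ≤ 16 * a ^ 3 := by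
      rw [div_le_iff₀ (by linarith)]
      have h3 : |r * w| ^ 3 ≤ (2 * a) ^ 3 := pow_le_pow_left₀ (abs_nonneg _) hx 3
      have h4 : 0 ≤ a ^ 3 := by positivity
      nlinarith
    simp only [abs_mul] at h h2
    have := (abs_le.1 (h.trans h2)).2
    nlinarith
  have hsqdiff : a ^ 2 - 3 * a ^ 3 ≤ w ^ 2 := by
    have h1 : |w + μ| ≤ 3 * a := (abs_add_le w μ).trans (by linarith)
    have h2 : |(w - μ) * (w + μ)| ≤ a ^ 2 * (3 * a) := by
      rw [abs_mul]; gcongr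
    have := (abs_le.1 h2).1
    nlinarith
  have hpos : 0 < 1 + r * w := by linarith [(abs_le.1 hxhalf).1]
  rw [← Real.log_le_iff_le_exp hpos]
  refine hlog.trans ?_
  have e1 : r * w ≤ r * (μ + μ ^ 2 / 2 + a ^ 3) :=
    mul_le_mul_of_nonneg_left (by linarith [(abs_le.1 hexp).2]) h0
  have e2 : r ^ 2 * (a ^ 2 - 3 * a ^ 3) ≤ r ^ 2 * w ^ 2 :=
    mul_le_mul_of_nonneg_left hsqdiff (sq_nonneg r)
  have h4 : 0 ≤ a ^ 3 := by positivity
  have e3 : r * a ^ 3 ≤ a ^ 3 := mul_le_of_le_one_left h4 h1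
  have e4 : r ^ 2 * a ^ 3 ≤ a ^ 3 := mul_le_of_le_one_left h4 (pow_le_one₀ h0 h1)
  rw [hsq] at e1 ⊢
  nlinarith

/-- Optimising the tilt: with `V = n * s` and `s = p * (2 - p - q)`, the choice `l = t / V` gives
the exponent `-t² / (2 * V) = -L`, up to a cubic error that `8 * L³ ≤ n * s³` keeps bounded. -/
lemma chernoff_exponent {p q t L : ℝ} (hq : 0 < q) (hqp : q < p) (hp : p < 1) {n D : ℕ}
    (hn : 64 ≤ n) (ht : 0 ≤ t) (hΔ : ((n : ℝ) + D) * q ≤ n * p - t)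
    (htL : t ^ 2 = 2 * (p * (2 - p - q)) * n * L)
    (hL : 8 * L ^ 3 ≤ n * (p * (2 - p - q)) ^ 3) :
    binomProb2 (n + D) q (n - 1) p (fun x y => y < x) ≤
      Real.exp (-L + 20 * (p / q + 1)) := by
  set s := p * (2 - p - q) with hs
  have hp0 : 0 < p := hq.trans hqp
  have hs0 : 0 < s := mul_pos hp0 (by linarith)
  have hnR : (64 : ℝ) ≤ n := by exact_mod_cast hn
  have hn0 : (0 : ℝ) < n := by linarith
  set l := t / (n * s) with hl
  have hl0 : 0 ≤ l := by positivity
  have hlt : l * (n * s) = t := by rw [hl]; field_simp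
  have hl2 : l ^ 2 * (n * s) = 2 * L := by
    rw [hl, div_pow, htL]; field_simp
  have hcube : n * l ^ 3 ≤ 1 := by
    have h : (n * l ^ 3) ^ 2 * (n * s ^ 3) = 8 * L ^ 3 := by
      calc (n * l ^ 3) ^ 2 * (n * s ^ 3) = (l ^ 2 * (n * s)) ^ 3 := by ring
        _ = 8 * L ^ 3 := by rw [hl2]; ring
    have h' : (n * l ^ 3) ^ 2 ≤ 1 :=
      le_of_mul_le_mul_right (by rw [h, one_mul]; exact hL) (by positivity : 0 < n * s ^ 3)
    exact (sq_le_one_iff₀ (by positivity)).1 h'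
  have hlq : l ≤ 1 / 4 := by
    by_contra! h
    have : (1 / 4 : ℝ) ^ 3 < l ^ 3 := by gcongr
    nlinarith
  have habs : |l| = l := abs_of_nonneg hl0
  have hX := bernoulli_mgf_le (r := q) (μ := l) hq.le (by linarith) (by rw [habs]; exact hlq)
  have hY := bernoulli_mgf_le (r := p) (μ := -l) hp0.le hp.le (by rw [abs_neg, habs]; exact hlq)
  rw [abs_neg] at hY
  rw [habs] at hX hY
  have hX0 : 0 ≤ 1 + q * (Real.exp l - 1) := by
    nlinarith [Real.exp_pos l]
  have hY0 : 0 ≤ 1 + p * (Real.exp (-l) - 1) := by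
    nlinarith [Real.exp_pos (-l)]
  refine (binomProb2_lt_le hq.le (by linarith) hp0.le hp.le hl0).trans ?_
  have hX' := pow_le_pow_left₀ hX0 hX (n + D)
  have hY' := pow_le_pow_left₀ hY0 hY (n - 1)
  rw [← Real.exp_nat_mul] at hX' hY'
  refine (mul_le_mul_of_nonneg_left (mul_le_mul hX' hY' (by positivity) (by positivity))
    (Real.exp_pos _).le).trans ?_
  rw [← Real.exp_add, ← Real.exp_add, Real.exp_le_exp]
  push_cast [Nat.cast_sub (show 1 ≤ n by omega)]
  -- `A` is the mean of `X`; the three estimates are for the terms of order one, two and three.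
  set A := ((n : ℝ) + D) * q with hA
  have hND : (n : ℝ) + D ≤ n * (p / q) := by
    rw [← mul_div_assoc, le_div_iff₀ hq]; linarith
  have o1 : l * (A + p - 1 - n * p) ≤ l * (-t) :=
    mul_le_mul_of_nonneg_left (by linarith) hl0
  have o2 : l ^ 2 / 2 * (A * (1 - q) + (n - 1) * (p * (1 - p))) ≤ l ^ 2 / 2 * (n * s) := by
    refine mul_le_mul_of_nonneg_left ?_ (by positivity)
    have i1 : A * (1 - q) ≤ n * p * (1 - q) :=
      mul_le_mul_of_nonneg_right (by linarith) (by linarith)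
    have i2 : 0 ≤ p * (1 - p) := mul_nonneg hp0.le (by linarith)
    have i3 : n * s = n * p * (1 - q) + n * (p * (1 - p)) := by rw [hs]; ring
    linarith
  have o3 : 20 * l ^ 3 * (((n : ℝ) + D) + (n - 1)) ≤ 20 * (p / q + 1) := by
    have i1 : l ^ 3 * (((n : ℝ) + D) + (n - 1)) ≤ l ^ 3 * (n * (p / q) + n) :=
      mul_le_mul_of_nonneg_left (by linarith) (by positivity)
    have i2 : (n * l ^ 3) * (p / q + 1) ≤ 1 * (p / q + 1) :=
      mul_le_mul_of_nonneg_right hcube (by positivity)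
    have i3 : l ^ 3 * (n * (p / q) + n) = (n * l ^ 3) * (p / q + 1) := by ring
    rw [mul_assoc]
    linarith
  have main : l * (-t) + l ^ 2 / 2 * (n * s) = -L := by
    have : l * t = 2 * L := by rw [← hlt, ← hl2]; ring
    linarith
  calc _ = l * (A + p - 1 - n * p) + l ^ 2 / 2 * (A * (1 - q) + (n - 1) * (p * (1 - p))) +
        20 * l ^ 3 * (((n : ℝ) + D) + (n - 1)) := by rw [hA]; ring
    _ ≤ _ := by linarith

/-- the regime (3.6) / `eq:first step ok` in the proof of Theorem 1.10(i).
Fix constants `0 < q < p < 1` and set `C' := q²/(2p(2−p−q))`.  Let `(dₙ)` be any sequence of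
reals with `dₙ → ∞`, and let `Δ = Δ(n)` be any sequence of nonnegative integers satisfying
`Δ(n) ≤ ((p−q)/q)·n − √(n·(log n + log log n + dₙ)/C')` for all large `n`.  Then
`n·P[Bin(n+Δ, q) > Bin(n−1, p)] → 0` as `n → ∞`, where the two binomial random variables are
independent. -/
theorem binomial_flip_expectation_vanishes
    (p q : ℝ) (hq : 0 < q) (hqp : q < p) (hp : p < 1)
    (d : ℕ → ℝ) (hd : Filter.Tendsto d Filter.atTop Filter.atTop)
    (Δ : ℕ → ℕ)
    (hΔ : ∀ᶠ n in Filter.atTop, (Δ n : ℝ) ≤ ((p - q) / q) * n -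
      Real.sqrt ((n : ℝ) * (Real.log n + Real.log (Real.log n) + d n) /
        (q ^ 2 / (2 * p * (2 - p - q))))) :
    Filter.Tendsto
      (fun n : ℕ => (n : ℝ) * binomProb2 (n + Δ n) q (n - 1) p (fun x y => y < x))
      Filter.atTop (nhds 0) := by
  have hp0 : 0 < p := hq.trans hqp
  set s := p * (2 - p - q) with hs
  have hs0 : 0 < s := mul_pos hp0 (by linarith)
  have hlogtop : Filter.Tendsto (fun n : ℕ => Real.log n) Filter.atTop Filter.atTop :=
    Real.tendsto_log_atTop.comp tendsto_natCast_atTop_atTop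
  have hd' : Filter.Tendsto (fun n => min (d n) (Real.log n)) Filter.atTop Filter.atTop :=
    Filter.tendsto_atTop.2 fun b => by
      filter_upwards [hd.eventually_ge_atTop b, hlogtop.eventually_ge_atTop b] with n h1 h2
      exact le_min h1 h2
  have hlim : Filter.Tendsto
      (fun n : ℕ => Real.exp (20 * (p / q + 1) - min (d n) (Real.log n)))
      Filter.atTop (nhds 0) :=
    Real.tendsto_exp_atBot.comp (Filter.tendsto_atBot_add_const_left _ (20 * (p / q + 1))
      (Filter.tendsto_neg_atTop_atBot.comp hd'))
  have hpoly : ∀ᶠ n : ℕ in Filter.atTop, ‖Real.log n ^ 3‖ ≤ (s ^ 3 / 216) * ‖(n : ℝ)‖ :=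
    tendsto_natCast_atTop_atTop.eventually
      ((Real.isLittleO_pow_log_id_atTop (n := 3)).bound (by positivity : 0 < s ^ 3 / 216))
  refine squeeze_zero' (Filter.Eventually.of_forall fun n => mul_nonneg n.cast_nonneg
    (binomProb2_nonneg hq.le (by linarith) hp0.le hp.le _)) ?_ hlim
  filter_upwards [hΔ, hpoly, hlogtop.eventually_ge_atTop 1, hd'.eventually_ge_atTop 0,
    Filter.eventually_ge_atTop 64] with n hΔn hpn hlog hdn hn
  set L := Real.log n + Real.log (Real.log n) + min (d n) (Real.log n) with hL
  have hn0 : (0 : ℝ) < n := by exact_mod_cast (by omega : 0 < n)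
  have hll0 : 0 ≤ Real.log (Real.log n) := Real.log_nonneg hlog
  have hll : Real.log (Real.log n) ≤ Real.log n := by
    linarith [Real.log_le_sub_one_of_pos (by linarith : 0 < Real.log n)]
  have hL0 : 0 ≤ L := by linarith
  have hL3 : L ≤ 3 * Real.log n := by linarith [min_le_right (d n) (Real.log n)]
  set C := q ^ 2 / (2 * p * (2 - p - q)) with hC
  have h2s : 2 * p * (2 - p - q) = 2 * s := by rw [hs]; ring
  have hC0 : 0 < C := by rw [hC, h2s]; positivity
  set R := Real.sqrt (n * L / C) with hR
  have hRle : R ≤ Real.sqrt ((n : ℝ) * (Real.log n + Real.log (Real.log n) + d n) / C) := by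
    refine Real.sqrt_le_sqrt ?_
    have := min_le_left (d n) (Real.log n)
    gcongr
    linarith
  have hgap : ((n : ℝ) + Δ n) * q ≤ n * p - q * R := by
    have h : (Δ n : ℝ) * q ≤ ((p - q) / q * n - R) * q :=
      mul_le_mul_of_nonneg_right (by linarith) hq.le
    have h' : ((p - q) / q * n - R) * q = (p - q) * n - q * R := by field_simp
    linarith
  have hsq : (q * R) ^ 2 = 2 * s * n * L := by
    rw [mul_pow, hR, Real.sq_sqrt (by positivity), hC, h2s]
    field_simp
  have hcub : 8 * L ^ 3 ≤ n * s ^ 3 := by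
    have h1 : L ^ 3 ≤ (3 * Real.log n) ^ 3 := pow_le_pow_left₀ hL0 hL3 3
    rw [Real.norm_of_nonneg (by positivity), Real.norm_of_nonneg hn0.le] at hpn
    nlinarith
  have hP := chernoff_exponent hq hqp hp hn (by positivity) hgap hsq hcub
  calc (n : ℝ) * binomProb2 (n + Δ n) q (n - 1) p (fun x y => y < x)
      ≤ Real.exp (Real.log n) * Real.exp (-L + 20 * (p / q + 1)) := by
        rw [Real.exp_log hn0]; gcongr
    _ ≤ _ := by
        rw [← Real.exp_add, Real.exp_le_exp]; linarith
end
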